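/- Suppose r ∈ ℕ and [α,β] ⊂ [i_r, j_r] (with α < β) is a proper subinterval such that every connected component of f_r^{-1}(red) is either disjoint from Pos[α,β] := {α⁺,…,β⁻} or entirely contained in it, and f_r(α⁺) = f_r(β⁻) = green. Then (π_r|_{[α,β]}, f_r|_{Pos[α,β]}) is a fixed point of the (restricted) T-operator, and T^r(ϑ, 𝐠𝐫𝐞𝐞𝐧) = (π_r|_{[α,β]}, f_r|_{Pos[α,β]}), where ϑ is the injection on [α,β] agreeing with π₀ on the open interval (α,β) and with ϑ(α) = π_r(α), ϑ(β) = π_r(β). -/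

import Mathlib

/-!
Cut `[1, μ]` at the green positions into *chunks*, the maximal runs joined by red positions. A step
of `T` merges the chunks from that of `i` up to that of `j` into one chunk, and its two end labels
become `π j` (left) and `π i` (right). Hence the two end labels of a chunk always lie in the same
clique of `𝓔`, and every step merges two chunks of equal class together with all chunks between
them. Since `j` is minimal, the chunks to its left have pairwise different classes, and this stays
true of the merged chunk and those to its left: the values `j_0 < j_1 < …` strictly increase, and
everything to the right of `j_t` is still untouched at time `t` (`Inv`, `Inv.step`). In particular
`b_t(j_t) = j_t`.

Since red positions stay red, and `α⁺` and `β⁻` are green at time `r`, each step `t < r` takes place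
either strictly inside `(α, β)` or outside it. A step outside does not affect the open interval. At
a step inside, `j_t > α`, so every later step lies to the right of `α` and `π_t(α) = π_r(α)`; as
`j_t < β`, the value at `β` is irrelevant. Thus the restricted operator started at `ϑ` selects the
same pair `(i_t, j_t)` (`sim_step`). After all inside steps the restricted state is that of time
`r`, which is fixed: a candidate pair in `[α, β]` would be one for the full state as well, and then
minimality of `j_r` and maximality of `i_r` force it to be `(i_r, j_r)`, excluded by properness.
-/

attribute [local instance] Classical.propDecidable

inductive Col where
  | green : Col
  | red : Col
deriving DecidableEq

namespace TOp

/-- The color of position `k⁺`; positions outside `{lo⁺, …, (hi−1)⁺}` count as green. -/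
def fpos (lo hi : ℕ) (f : ℕ → Col) (k : ℕ) : Col :=
  if lo ≤ k ∧ k + 1 ≤ hi then f k else Col.green

/-- `j` is a candidate value for `j_{(π,f)}` : there is `i < j` with
`f(i⁺) = f(j⁻) = green` and `{i,j} ∈ π⁻¹(𝓔)`. -/
def jSpec (lo hi : ℕ) (E : ℕ → ℕ → Prop) (π : ℕ → ℕ) (f : ℕ → Col) (j : ℕ) : Prop :=
  lo ≤ j ∧ j ≤ hi ∧ ∃ i, lo ≤ i ∧ i < j ∧
    fpos lo hi f i = Col.green ∧ fpos lo hi f (j - 1) = Col.green ∧ E (π i) (π j)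

/-- `(π,f)` is not a fixed point of `T`, i.e. `j_{(π,f)} < +∞`. -/
def hasJ (lo hi : ℕ) (E : ℕ → ℕ → Prop) (π : ℕ → ℕ) (f : ℕ → Col) : Prop :=
  ∃ j, jSpec lo hi E π f j

/-- `j_{(π,f)}` (junk value if no candidate exists). -/
noncomputable def jVal (lo hi : ℕ) (E : ℕ → ℕ → Prop) (π : ℕ → ℕ) (f : ℕ → Col) : ℕ :=
  sInf {j | jSpec lo hi E π f j}

/-- `i_{(π,f)}`. -/
noncomputable def iVal (lo hi : ℕ) (E : ℕ → ℕ → Prop) (π : ℕ → ℕ) (f : ℕ → Col) : ℕ :=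
  sSup {i | lo ≤ i ∧ i < jVal lo hi E π f ∧ fpos lo hi f i = Col.green ∧
    E (π i) (π (jVal lo hi E π f))}

/-- `a_{(π,f)}(k)`. -/
noncomputable def aVal (lo hi : ℕ) (f : ℕ → Col) (k : ℕ) : ℕ :=
  if fpos lo hi f (k - 1) = Col.green then k
  else sInf {i' | i' ≤ k ∧ ∀ i'', i' ≤ i'' → i'' < k → fpos lo hi f i'' = Col.red}

/-- `b_{(π,f)}(k)`. -/
noncomputable def bVal (lo hi : ℕ) (f : ℕ → Col) (k : ℕ) : ℕ :=
  if fpos lo hi f k = Col.green then k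
  else sSup {j' | k ≤ j' ∧ ∀ j'', k < j'' → j'' ≤ j' → fpos lo hi f (j'' - 1) = Col.red}

/-- The operator `T` on states `(π, f)`. -/
noncomputable def Tstep (lo hi : ℕ) (E : ℕ → ℕ → Prop)
    (s : (ℕ → ℕ) × (ℕ → Col)) : (ℕ → ℕ) × (ℕ → Col) :=
  if hasJ lo hi E s.1 s.2 then
    let a := aVal lo hi s.2 (iVal lo hi E s.1 s.2)
    let b := bVal lo hi s.2 (jVal lo hi E s.1 s.2)
    (fun k => if a ≤ k ∧ k ≤ b then
        s.1 (aVal lo hi s.2 (a + b - k) + bVal lo hi s.2 (a + b - k) - (a + b - k))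
      else s.1 k,
     fun k => if a ≤ k ∧ k < b then Col.red else s.2 k)
  else s

/-- `(π_r, f_r) = T^r(π₀, 𝐠𝐫𝐞𝐞𝐧)`. -/
noncomputable def TIter (lo hi : ℕ) (E : ℕ → ℕ → Prop) (π₀ : ℕ → ℕ) (r : ℕ) :
    (ℕ → ℕ) × (ℕ → Col) :=
  (Tstep lo hi E)^[r] (π₀, fun _ => Col.green)

/-- `j_{(π,f)}` as an extended natural number (`⊤` encodes `+∞`). -/
noncomputable def jE (lo hi : ℕ) (E : ℕ → ℕ → Prop) (π : ℕ → ℕ) (f : ℕ → Col) : ℕ∞ :=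
  if hasJ lo hi E π f then (jVal lo hi E π f : ℕ∞) else ⊤

end TOp

namespace TOp

/-! ### Chunk ends -/

lemma red_of_not_green {c : Col} (h : ¬ c = Col.green) : c = Col.red := by
  cases c <;> simp_all

lemma fpos_in {lo hi : ℕ} {f : ℕ → Col} {k : ℕ} (h : lo ≤ k) (h' : k < hi) :
    fpos lo hi f k = f k := if_pos ⟨h, h'⟩

lemma fpos_out {lo hi : ℕ} {f : ℕ → Col} {k : ℕ} (h : k < lo ∨ hi ≤ k) :
    fpos lo hi f k = Col.green := if_neg (by omega)

lemma aVal_eq {lo hi : ℕ} {f : ℕ → Col} {k x : ℕ} (hx : x ≤ k)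
    (hg : fpos lo hi f (x - 1) = Col.green)
    (hr : ∀ i, x ≤ i → i < k → fpos lo hi f i = Col.red) : aVal lo hi f k = x := by
  unfold aVal
  rcases hx.eq_or_lt with rfl | hlt
  · rw [if_pos hg]
  · rw [if_neg (by rw [hr (k - 1) (by omega) (by omega)]; simp)]
    refine IsLeast.csInf_eq ⟨⟨hx, hr⟩, ?_⟩
    rintro y ⟨_, hy⟩
    by_contra hc
    have := hy (x - 1) (by omega) (by omega)
    simp_all

lemma bVal_eq {lo hi : ℕ} {f : ℕ → Col} {k y : ℕ} (hy : k ≤ y)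
    (hg : fpos lo hi f y = Col.green)
    (hr : ∀ i, k ≤ i → i < y → fpos lo hi f i = Col.red) : bVal lo hi f k = y := by
  unfold bVal
  rcases hy.eq_or_lt with rfl | hlt
  · rw [if_pos hg]
  · rw [if_neg (by rw [hr k le_rfl hlt]; simp)]
    refine IsGreatest.csSup_eq ⟨⟨hy, fun j h1 h2 => hr (j - 1) (by omega) (by omega)⟩, ?_⟩
    rintro z ⟨_, hz⟩
    by_contra hc
    have := hz (y + 1) (by omega) (by omega)
    simp_all

lemma aVal_spec {lo hi : ℕ} {f : ℕ → Col} (hlo : 1 ≤ lo) {k : ℕ} (hk : lo ≤ k) :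
    lo ≤ aVal lo hi f k ∧ aVal lo hi f k ≤ k ∧ fpos lo hi f (aVal lo hi f k - 1) = Col.green ∧
      ∀ i, aVal lo hi f k ≤ i → i < k → fpos lo hi f i = Col.red := by
  obtain ⟨x, h0, h1, h2, h3⟩ : ∃ x, lo ≤ x ∧ x ≤ k ∧ fpos lo hi f (x - 1) = Col.green ∧
      ∀ i, x ≤ i → i < k → fpos lo hi f i = Col.red := by
    induction k, hk using Nat.le_induction with
    | base => exact ⟨lo, le_rfl, le_rfl, fpos_out (by omega), by omega⟩
    | succ k hk ih =>
      by_cases hg : fpos lo hi f k = Col.green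
      · exact ⟨k + 1, by omega, le_rfl, hg, by omega⟩
      · obtain ⟨x, h0, h1, h2, h3⟩ := ih
        refine ⟨x, h0, by omega, h2, fun i hi1 hi2 => ?_⟩
        rcases (Nat.lt_succ_iff.mp hi2).eq_or_lt with rfl | h
        · exact red_of_not_green hg
        · exact h3 i hi1 h
  rw [aVal_eq h1 h2 h3]
  exact ⟨h0, h1, h2, h3⟩

lemma bVal_spec {lo hi : ℕ} {f : ℕ → Col} {k : ℕ} :
    k ≤ bVal lo hi f k ∧ fpos lo hi f (bVal lo hi f k) = Col.green ∧
      ∀ i, k ≤ i → i < bVal lo hi f k → fpos lo hi f i = Col.red := by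
  have hex : ∃ y, k ≤ y ∧ fpos lo hi f y = Col.green :=
    ⟨max k hi, le_max_left _ _, fpos_out (Or.inr (le_max_right _ _))⟩
  have h := Nat.find_spec hex
  have h3 : ∀ i, k ≤ i → i < Nat.find hex → fpos lo hi f i = Col.red := fun i h1 h2 =>
    red_of_not_green fun hg => Nat.find_min hex h2 ⟨h1, hg⟩
  rw [bVal_eq h.1 h.2 h3]
  exact ⟨h.1, h.2, h3⟩

/-! ### The selected pair -/

lemma jVal_spec {lo hi : ℕ} {E : ℕ → ℕ → Prop} {π : ℕ → ℕ} {f : ℕ → Col}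
    (h : hasJ lo hi E π f) : jSpec lo hi E π f (jVal lo hi E π f) :=
  Nat.sInf_mem (s := {j | jSpec lo hi E π f j}) h

lemma jVal_le {lo hi : ℕ} {E : ℕ → ℕ → Prop} {π : ℕ → ℕ} {f : ℕ → Col} {j : ℕ}
    (h : jSpec lo hi E π f j) : jVal lo hi E π f ≤ j :=
  Nat.sInf_le (s := {j | jSpec lo hi E π f j}) h

lemma iVal_greatest {lo hi : ℕ} {E : ℕ → ℕ → Prop} {π : ℕ → ℕ} {f : ℕ → Col}
    (h : hasJ lo hi E π f) :
    IsGreatest {i | lo ≤ i ∧ i < jVal lo hi E π f ∧ fpos lo hi f i = Col.green ∧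
      E (π i) (π (jVal lo hi E π f))} (iVal lo hi E π f) := by
  obtain ⟨_, _, i, h1, h2, h3, _, h5⟩ := jVal_spec h
  have hb : BddAbove {i | lo ≤ i ∧ i < jVal lo hi E π f ∧ fpos lo hi f i = Col.green ∧
      E (π i) (π (jVal lo hi E π f))} := ⟨jVal lo hi E π f, fun x hx => hx.2.1.le⟩
  exact ⟨Nat.sSup_mem ⟨i, h1, h2, h3, h5⟩ hb, fun x hx => le_csSup hb hx⟩

/-! ### The invariant -/

/-- Invariant of the iteration: everything from position `J⁺` on is still green, all candidates
for `j` exceed `J`, end labels of different chunks differ (only the two cases needed: right/right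
and right/left), and the two end labels of a chunk are equal or eligible. -/
structure Inv (μ : ℕ) (E : ℕ → ℕ → Prop) (π : ℕ → ℕ) (f : ℕ → Col) (J : ℕ) : Prop where
  green : ∀ k, J ≤ k → fpos 1 μ f k = Col.green
  lt : ∀ j, jSpec 1 μ E π f j → J < j
  ne_right : ∀ x y, 1 ≤ x → x < y → y ≤ μ → fpos 1 μ f x = Col.green →
    fpos 1 μ f y = Col.green → π x ≠ π y
  ne_left : ∀ x y, 1 ≤ x → x < y → y ≤ μ → fpos 1 μ f x = Col.green →
    fpos 1 μ f (y - 1) = Col.green → π x ≠ π y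
  chunk : ∀ x y, 1 ≤ x → x ≤ y → y ≤ μ → fpos 1 μ f (x - 1) = Col.green →
    fpos 1 μ f y = Col.green → (∀ k, x ≤ k → k < y → fpos 1 μ f k = Col.red) →
    π x = π y ∨ E (π x) (π y)

/-- Description of a step that flips `[a, j]`, the chunk `[a, i]` being the leftmost one involved. -/
structure StepData (μ : ℕ) (E : ℕ → ℕ → Prop) (π : ℕ → ℕ) (f : ℕ → Col) (a i j : ℕ) : Prop where
  j_eq : jVal 1 μ E π f = j
  i_eq : iVal 1 μ E π f = i
  a_eq : aVal 1 μ f i = a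
  step_eq : Tstep 1 μ E (π, f) = (fun k => if a ≤ k ∧ k ≤ j then
        π (aVal 1 μ f (a + j - k) + bVal 1 μ f (a + j - k) - (a + j - k)) else π k,
     fun k => if a ≤ k ∧ k < j then Col.red else f k)
  one_le : 1 ≤ a
  a_le : a ≤ i
  i_lt : i < j
  j_le : j ≤ μ
  green_a : fpos 1 μ f (a - 1) = Col.green
  red : ∀ k, a ≤ k → k < i → fpos 1 μ f k = Col.red
  green_i : fpos 1 μ f i = Col.green
  green_pj : fpos 1 μ f (j - 1) = Col.green
  green_j : fpos 1 μ f j = Col.green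
  rel : E (π i) (π j)

lemma Inv.data {μ : ℕ} {E : ℕ → ℕ → Prop} {π : ℕ → ℕ} {f : ℕ → Col} {J : ℕ}
    (h : Inv μ E π f J) (hJ : hasJ 1 μ E π f) :
    ∃ a i j, StepData μ E π f a i j ∧ J < j := by
  have hj := jVal_spec hJ
  obtain ⟨hi1, hi2, hi3, hi4⟩ := (iVal_greatest hJ).1
  have ha := aVal_spec (hi := μ) (f := f) le_rfl hi1
  have hlt := h.lt _ hj
  have hgj := h.green _ hlt.le
  obtain ⟨_, h2, _, _, _, _, h6, _⟩ := hj
  refine ⟨_, _, _, ⟨rfl, rfl, rfl, ?_, ha.1, ha.2.1, hi2, h2, ha.2.2.1, ha.2.2.2, hi3, h6,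
    hgj, hi4⟩, hlt⟩
  have hb : bVal 1 μ f (jVal 1 μ E π f) = jVal 1 μ E π f := bVal_eq le_rfl hgj (by omega)
  simp only [Tstep, hJ, if_true, hb]

section Step

variable {μ : ℕ} {E : ℕ → ℕ → Prop} {π : ℕ → ℕ} {f : ℕ → Col} {a i j : ℕ}

lemma StepData.fpos_step (d : StepData μ E π f a i j) (k : ℕ) :
    fpos 1 μ (Tstep 1 μ E (π, f)).2 k =
      if a ≤ k ∧ k < j then Col.red else fpos 1 μ f k := by
  have := d.one_le
  have := d.j_le
  rw [d.step_eq]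
  by_cases h : a ≤ k ∧ k < j
  · simp only [h, and_self, if_true]
    rw [fpos_in (by omega) (by omega)]
    simp [h]
  · simp only [fpos, h, if_false]

lemma StepData.perm_out (d : StepData μ E π f a i j) {k : ℕ} (h : k < a ∨ j < k) :
    (Tstep 1 μ E (π, f)).1 k = π k := by
  rw [d.step_eq]
  exact if_neg (by omega)

lemma StepData.perm_a (d : StepData μ E π f a i j) : (Tstep 1 μ E (π, f)).1 a = π j := by
  have := d.a_le
  have := d.i_lt
  rw [d.step_eq]
  have h1 : aVal 1 μ f j = j := aVal_eq le_rfl d.green_pj (by omega)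
  have h2 : bVal 1 μ f j = j := bVal_eq le_rfl d.green_j (by omega)
  have h3 : a + j - a = j := by omega
  simp only [h3, h1, h2]
  rw [if_pos (by omega)]
  congr 1; omega

lemma StepData.perm_j (d : StepData μ E π f a i j) : (Tstep 1 μ E (π, f)).1 j = π i := by
  have := d.a_le
  have := d.i_lt
  rw [d.step_eq]
  have h1 : aVal 1 μ f a = a := aVal_eq le_rfl d.green_a (by omega)
  have h2 : bVal 1 μ f a = i := bVal_eq d.a_le d.green_i d.red
  have h3 : a + j - j = a := by omega
  simp only [h3, h1, h2]
  rw [if_pos (by omega)]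
  congr 1; omega

/-- A step keeps the invariant, with new threshold `j`. -/
lemma Inv.step {J : ℕ} (h : Inv μ E π f J) (hEsymm : ∀ x y, E x y → E y x)
    (hEclique : ∀ x y z, E x y → E y z → x ≠ z → E x z) (d : StepData μ E π f a i j)
    (hJj : J < j) :
    Inv μ E (Tstep 1 μ E (π, f)).1 (Tstep 1 μ E (π, f)).2 j := by
  have ha1 := d.one_le
  have hai := d.a_le
  have hij := d.i_lt
  have hjμ := d.j_le
  -- green positions of the new colouring lie outside `[a, j)` and were green before
  have hG : ∀ k, fpos 1 μ (Tstep 1 μ E (π, f)).2 k = Col.green →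
      (k < a ∨ j ≤ k) ∧ fpos 1 μ f k = Col.green := by
    intro k hk
    rw [d.fpos_step] at hk
    split_ifs at hk with hc
    exact ⟨by omega, hk⟩
  have hgr : ∀ k, j ≤ k → fpos 1 μ (Tstep 1 μ E (π, f)).2 k = Col.green := by
    intro k hk
    rw [d.fpos_step, if_neg (by omega)]
    exact h.green k (by omega)
  have hga : fpos 1 μ (Tstep 1 μ E (π, f)).2 (a - 1) = Col.green := by
    rw [d.fpos_step, if_neg (by omega)]
    exact d.green_a
  have hmin : ∀ j', jSpec 1 μ E π f j' → j ≤ j' := fun j' hj' => d.j_eq ▸ jVal_le hj'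
  refine ⟨hgr, ?_, ?_, ?_, ?_⟩
  · rintro j' ⟨h1, h2, i', h3, h4, h5, h6, h7⟩
    by_contra hc
    obtain ⟨h5a, h5b⟩ := hG _ h5
    obtain ⟨h6a, h6b⟩ := hG _ h6
    have hj'a : j' ≤ a := by omega
    rw [d.perm_out (k := i') (by omega)] at h7
    rcases hj'a.eq_or_lt with rfl | hlt
    · -- the label at `a` is now `π j`, of the class of the old label at `a`
      rw [d.perm_a] at h7
      have hne := h.ne_right i' i h3 (by omega) (by omega) h5b d.green_i
      have h8 : E (π i') (π i) := hEclique _ _ _ h7 (hEsymm _ _ d.rel) hne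
      have hne' := h.ne_left i' j' h3 h4 (by omega) h5b d.green_a
      have h9 : E (π i') (π j') := by
        rcases h.chunk j' i h1 hai (by omega) d.green_a d.green_i d.red with he | he
        · rwa [he]
        · exact hEclique _ _ _ h8 (hEsymm _ _ he) hne'
      have := hmin j' ⟨h1, h2, i', h3, h4, h5b, h6b, h9⟩
      omega
    · rw [d.perm_out (by omega)] at h7
      have := hmin j' ⟨h1, h2, i', h3, h4, h5b, h6b, h7⟩
      omega
  · intro x y hx hxy hy gx gy
    obtain ⟨gxa, gxb⟩ := hG _ gx
    obtain ⟨gya, gyb⟩ := hG _ gy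
    by_cases hxj : x = j
    · subst hxj
      rw [d.perm_j, d.perm_out (k := y) (by omega)]
      exact h.ne_right i y (by omega) (by omega) hy d.green_i gyb
    · rw [d.perm_out (k := x) (by omega)]
      by_cases hyj : y = j
      · subst hyj
        rw [d.perm_j]
        exact h.ne_right x i hx (by omega) (by omega) gxb d.green_i
      · rw [d.perm_out (k := y) (by omega)]
        exact h.ne_right x y hx hxy hy gxb gyb
  · intro x y hx hxy hy gx gy
    obtain ⟨gxa, gxb⟩ := hG _ gx
    obtain ⟨gya, gyb⟩ := hG _ gy
    by_cases hxj : x = j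
    · subst hxj
      rw [d.perm_j, d.perm_out (k := y) (by omega)]
      exact h.ne_left i y (by omega) (by omega) hy d.green_i gyb
    · rw [d.perm_out (k := x) (by omega)]
      by_cases hya : y = a
      · subst hya
        rw [d.perm_a]
        exact h.ne_left x j hx (by omega) (by omega) gxb d.green_pj
      · rw [d.perm_out (k := y) (by omega)]
        exact h.ne_left x y hx hxy hy gxb gyb
  · intro x y hx hxy hy gx gy hred
    obtain ⟨gxa, gxb⟩ := hG _ gx
    obtain ⟨gya, gyb⟩ := hG _ gy
    have key : ∀ k, x ≤ k → fpos 1 μ (Tstep 1 μ E (π, f)).2 k = Col.green → y ≤ k := by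
      intro k hk hg
      by_contra hc
      have := hred k hk (by omega)
      simp_all
    by_cases hxa : x = a
    · subst hxa
      have hyj : y = j := by
        have := key j (by omega) (hgr j le_rfl)
        omega
      subst hyj
      rw [d.perm_a, d.perm_j]
      exact Or.inr (hEsymm _ _ d.rel)
    · have hy' : y < a ∨ j < x := by
        by_cases hxl : x < a
        · have := key (a - 1) (by omega) hga
          omega
        · omega
      rw [d.perm_out (k := x) (by omega), d.perm_out (k := y) (by omega)]
      refine h.chunk x y hx hxy hy gxb gyb fun k h1 h2 => ?_
      have := hred k h1 h2
      rwa [d.fpos_step, if_neg (by omega)] at this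

/-! ### Simulation of an inside step -/

/-- A step of the full system strictly inside `(α, β)` is also the step of the restricted system,
provided the two states agree on `[α, β)`. -/
lemma sim_step (d : StepData μ E π f a i j) (hJ : hasJ 1 μ E π f) {α β : ℕ} (hα : 1 ≤ α)
    (hβ : β ≤ μ) (haα : α < a) (hjβ : j < β) (σ : ℕ → ℕ) (g : ℕ → Col)
    (hσ : ∀ k, α ≤ k → k < β → σ k = π k) (hg : ∀ k, α ≤ k → k < β → g k = f k) :
    Tstep α β E (σ, g) = (fun k => if a ≤ k ∧ k ≤ j then
        π (aVal 1 μ f (a + j - k) + bVal 1 μ f (a + j - k) - (a + j - k)) else σ k,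
      fun k => if a ≤ k ∧ k < j then Col.red else g k) := by
  have hai := d.a_le
  have hij := d.i_lt
  have hF : ∀ k, α ≤ k → k < β → fpos α β g k = fpos 1 μ f k := by
    intro k h1 h2
    rw [fpos_in h1 h2, fpos_in (by omega) (by omega), hg k h1 h2]
  have hjs : jSpec α β E σ g j := by
    refine ⟨by omega, by omega, i, by omega, hij, ?_, ?_, ?_⟩
    · rw [hF _ (by omega) (by omega)]; exact d.green_i
    · rw [hF _ (by omega) (by omega)]; exact d.green_pj
    · rw [hσ i (by omega) (by omega), hσ j (by omega) (by omega)]; exact d.rel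
  have hasj : hasJ α β E σ g := ⟨j, hjs⟩
  have hjv : jVal α β E σ g = j := by
    refine le_antisymm (jVal_le hjs) ?_
    by_contra hc
    obtain ⟨h1, h2, i', h3, h4, h5, h6, h7⟩ := jVal_spec hasj
    rw [hF _ (by omega) (by omega)] at h5 h6
    rw [hσ _ (by omega) (by omega), hσ _ (by omega) (by omega)] at h7
    have := jVal_le (lo := 1) (hi := μ) (E := E) (π := π) (f := f)
      ⟨by omega, by omega, i', by omega, h4, h5, h6, h7⟩
    rw [d.j_eq] at this
    omega
  have hmax := (iVal_greatest hJ).2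
  rw [d.j_eq, d.i_eq] at hmax
  have hiv : iVal α β E σ g = i := by
    obtain ⟨⟨h1, h2, h3, h4⟩, hm⟩ := iVal_greatest hasj
    rw [hjv] at h2 h4 hm
    rw [hF _ (by omega) (by omega)] at h3
    rw [hσ _ (by omega) (by omega), hσ _ (by omega) (by omega)] at h4
    refine le_antisymm (hmax ⟨by omega, h2, h3, h4⟩) (hm ⟨by omega, hij, ?_, ?_⟩)
    · rw [hF _ (by omega) (by omega)]; exact d.green_i
    · rw [hσ i (by omega) (by omega), hσ j (by omega) (by omega)]; exact d.rel
  have hA : ∀ k, a ≤ k → k ≤ j → a ≤ aVal 1 μ f k ∧ aVal 1 μ f k ≤ k ∧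
      aVal α β g k = aVal 1 μ f k := by
    intro k h1 h2
    obtain ⟨q1, q2, q3, q4⟩ := aVal_spec (hi := μ) (f := f) le_rfl (show 1 ≤ k by omega)
    have hle : a ≤ aVal 1 μ f k := by
      by_contra hc
      have := q4 (a - 1) (by omega) (by omega)
      rw [d.green_a] at this
      simp at this
    refine ⟨hle, q2, aVal_eq q2 ?_ fun m m1 m2 => ?_⟩
    · rw [hF _ (by omega) (by omega), q3]
    · rw [hF _ (by omega) (by omega), q4 m m1 m2]
  have hB : ∀ k, a ≤ k → k ≤ j → k ≤ bVal 1 μ f k ∧ bVal 1 μ f k ≤ j ∧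
      bVal α β g k = bVal 1 μ f k := by
    intro k h1 h2
    obtain ⟨q2, q3, q4⟩ := bVal_spec (lo := 1) (hi := μ) (f := f) (k := k)
    have hle : bVal 1 μ f k ≤ j := by
      by_contra hc
      have := q4 j (by omega) (by omega)
      rw [d.green_j] at this
      simp at this
    refine ⟨q2, hle, bVal_eq q2 ?_ fun m m1 m2 => ?_⟩
    · rw [hF _ (by omega) (by omega), q3]
    · rw [hF _ (by omega) (by omega), q4 m m1 m2]
  have ha : aVal α β g i = a := by rw [(hA i hai hij.le).2.2, d.a_eq]
  have hb : bVal α β g j = j :=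
    bVal_eq le_rfl (by rw [hF _ (by omega) hjβ, d.green_j]) (by omega)
  simp only [Tstep, hasj, if_true, hjv, hiv, ha, hb, Prod.mk.injEq, and_true]
  funext k
  by_cases hk : a ≤ k ∧ k ≤ j
  · simp only [hk, and_self, if_true]
    obtain ⟨u1, u2, u3⟩ := hA (a + j - k) (by omega) (by omega)
    obtain ⟨v1, v2, v3⟩ := hB (a + j - k) (by omega) (by omega)
    rw [u3, v3, hσ _ (by omega) (by omega)]
  · simp only [hk, if_false]

end Step

/-! ### The trajectory -/

lemma TIter_succ (lo hi : ℕ) (E : ℕ → ℕ → Prop) (π₀ : ℕ → ℕ) (r : ℕ) :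
    TIter lo hi E π₀ (r + 1) = Tstep lo hi E (TIter lo hi E π₀ r) :=
  Function.iterate_succ_apply' _ _ _

lemma Tstep_of_not {lo hi : ℕ} {E : ℕ → ℕ → Prop} {s : (ℕ → ℕ) × (ℕ → Col)}
    (h : ¬ hasJ lo hi E s.1 s.2) : Tstep lo hi E s = s := if_neg h

/-- Fixed points persist, so a state that still moves at time `r` moved at all earlier times. -/
lemma hasJ_of_le {lo hi : ℕ} {E : ℕ → ℕ → Prop} {π₀ : ℕ → ℕ} {t r : ℕ} (h : t ≤ r)
    (hJ : hasJ lo hi E (TIter lo hi E π₀ r).1 (TIter lo hi E π₀ r).2) :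
    hasJ lo hi E (TIter lo hi E π₀ t).1 (TIter lo hi E π₀ t).2 := by
  induction r, h using Nat.le_induction with
  | base => exact hJ
  | succ r hr ih =>
    apply ih
    by_contra hc
    rw [TIter_succ, Tstep_of_not hc] at hJ
    exact hc hJ

/-- Along a trajectory that moves up to time `r`, all steps are described by sequences `a, i, j`
with `j` strictly increasing. -/
lemma exists_data {μ : ℕ} {E : ℕ → ℕ → Prop} (hEsymm : ∀ x y, E x y → E y x)
    (hEclique : ∀ x y z, E x y → E y z → x ≠ z → E x z)
    {π₀ : ℕ → ℕ} (hπ₀ : Set.InjOn π₀ (Set.Icc 1 μ)) {r : ℕ}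
    (hJ : hasJ 1 μ E (TIter 1 μ E π₀ r).1 (TIter 1 μ E π₀ r).2) :
    ∃ a i j : ℕ → ℕ, (∀ t, t ≤ r →
      StepData μ E (TIter 1 μ E π₀ t).1 (TIter 1 μ E π₀ t).2 (a t) (i t) (j t)) ∧
      ∀ t, t < r → j t < j (t + 1) := by
  have hinv : ∀ t, t ≤ r → ∃ J, Inv μ E (TIter 1 μ E π₀ t).1 (TIter 1 μ E π₀ t).2 J := by
    intro t
    induction t with
    | zero =>
      intro _
      have hgr : ∀ k, fpos 1 μ (fun _ => Col.green) k = Col.green := by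
        intro k; simp [fpos]
      have hne : ∀ x y, 1 ≤ x → x < y → y ≤ μ → π₀ x ≠ π₀ y := by
        intro x y h1 h2 h3 h4
        have := hπ₀ ⟨h1, by omega⟩ ⟨by omega, h3⟩ h4
        omega
      refine ⟨1, fun k _ => hgr k, ?_, fun x y h1 h2 h3 _ _ => hne x y h1 h2 h3,
        fun x y h1 h2 h3 _ _ => hne x y h1 h2 h3, ?_⟩
      · rintro j ⟨_, _, i, h1, h2, _⟩
        omega
      · intro x y _ hxy _ _ _ hr
        rcases hxy.eq_or_lt with rfl | hlt
        · exact Or.inl rfl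
        · have := hr x le_rfl hlt
          exact absurd ((hgr x).symm.trans this) (by simp)
    | succ t ih =>
      intro ht
      obtain ⟨J, h⟩ := ih (by omega)
      obtain ⟨a, i, j, d, hlt⟩ := h.data (hasJ_of_le (by omega) hJ)
      rw [TIter_succ]
      exact ⟨j, h.step hEsymm hEclique d hlt⟩
  have hex : ∀ t, ∃ a i j, t ≤ r →
      StepData μ E (TIter 1 μ E π₀ t).1 (TIter 1 μ E π₀ t).2 a i j := by
    intro t
    by_cases ht : t ≤ r
    · obtain ⟨J, h⟩ := hinv t ht
      obtain ⟨a, i, j, d, _⟩ := h.data (hasJ_of_le ht hJ)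
      exact ⟨a, i, j, fun _ => d⟩
    · exact ⟨0, 0, 0, fun h => absurd h ht⟩
  choose a i j hd using hex
  refine ⟨a, i, j, hd, fun t ht => ?_⟩
  obtain ⟨J, h⟩ := hinv t ht.le
  have hJt := hasJ_of_le ht.le hJ
  obtain ⟨a', i', j', d', hlt⟩ := h.data hJt
  have e : j' = j t := d'.j_eq.symm.trans (hd t ht.le).j_eq
  have h' := h.step hEsymm hEclique d' hlt
  have hs := jVal_spec (hasJ_of_le (t := t + 1) ht hJ)
  rw [(hd (t + 1) ht).j_eq, TIter_succ] at hs
  have := h'.lt _ hs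
  omega

end TOp

open TOp in
/-- Suppose `[α,β] ⊂ [i_r, j_r]` (with `α < β`) is a proper subinterval
such that every connected component of `f_r⁻¹(red)` (i.e. every run of consecutive red
positions) is either disjoint from `Pos[α,β] = {α⁺,…,β⁻}` or entirely contained in it,
and `f_r(α⁺) = f_r(β⁻) = green`.  Then `(π_r|_{[α,β]}, f_r|_{Pos[α,β]})` is a fixed point
of the `T`-operator restricted to the interval `[α,β]`, and
`T^r(ϑ, 𝐠𝐫𝐞𝐞𝐧) = (π_r|_{[α,β]}, f_r|_{Pos[α,β]})` where `ϑ` agrees with `π₀` on the open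
interval `(α,β)` and `ϑ(α) = π_r(α)`, `ϑ(β) = π_r(β)`. -/
theorem stmt11 (μ : ℕ) (hμ : 2 ≤ μ) (E : ℕ → ℕ → Prop)
    (hEsymm : ∀ x y, E x y → E y x)
    (hEirr : ∀ x, ¬ E x x)
    (hEmem : ∀ x y, E x y → 1 ≤ x ∧ x ≤ μ ∧ 1 ≤ y ∧ y ≤ μ)
    (hEclique : ∀ x y z, E x y → E y z → x ≠ z → E x z)
    (π₀ : ℕ → ℕ) (hπ₀ : Set.BijOn π₀ (Set.Icc 1 μ) (Set.Icc 1 μ))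
    (r α β : ℕ)
    (hJ : hasJ 1 μ E (TIter 1 μ E π₀ r).1 (TIter 1 μ E π₀ r).2)
    (hαβ : α < β)
    (hα : iVal 1 μ E (TIter 1 μ E π₀ r).1 (TIter 1 μ E π₀ r).2 ≤ α)
    (hβ : β ≤ jVal 1 μ E (TIter 1 μ E π₀ r).1 (TIter 1 μ E π₀ r).2)
    (hproper : iVal 1 μ E (TIter 1 μ E π₀ r).1 (TIter 1 μ E π₀ r).2 < α ∨
      β < jVal 1 μ E (TIter 1 μ E π₀ r).1 (TIter 1 μ E π₀ r).2)
    (hcomp : ∀ a b, a ≤ b →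
      (∀ k, a ≤ k → k ≤ b → fpos 1 μ (TIter 1 μ E π₀ r).2 k = Col.red) →
      ((α ≤ a ∧ b < β) ∨ b < α ∨ β ≤ a))
    (hgα : fpos 1 μ (TIter 1 μ E π₀ r).2 α = Col.green)
    (hgβ : fpos 1 μ (TIter 1 μ E π₀ r).2 (β - 1) = Col.green) :
    Tstep α β E (TIter 1 μ E π₀ r) = TIter 1 μ E π₀ r ∧
    (∀ k, α ≤ k → k ≤ β →
      ((Tstep α β E)^[r]
          ((fun m => if m = α ∨ m = β then (TIter 1 μ E π₀ r).1 m else π₀ m),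
            fun _ => Col.green)).1 k = (TIter 1 μ E π₀ r).1 k) ∧
    (∀ k, α ≤ k → k ≤ β - 1 →
      ((Tstep α β E)^[r]
          ((fun m => if m = α ∨ m = β then (TIter 1 μ E π₀ r).1 m else π₀ m),
            fun _ => Col.green)).2 k = (TIter 1 μ E π₀ r).2 k) := by
  obtain ⟨a, i, j, hd, hlt⟩ := exists_data hEsymm hEclique hπ₀.injOn hJ
  have hmono : ∀ t u, t ≤ u → u ≤ r → j t ≤ j u := by
    intro t u htu
    induction u, htu using Nat.le_induction with
    | base => exact fun _ => le_rfl
    | succ u hu ih => exact fun h => (ih (by omega)).trans (hlt u h).le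
  have hstep : ∀ t, TIter 1 μ E π₀ (t + 1) =
      Tstep 1 μ E ((TIter 1 μ E π₀ t).1, (TIter 1 μ E π₀ t).2) := fun t => TIter_succ _ _ _ _ _
  have dr := hd r le_rfl
  have hmax := (iVal_greatest hJ).2
  rw [dr.i_eq] at hα hproper hmax
  rw [dr.j_eq] at hβ hproper hmax
  have hα1 : 1 ≤ α := dr.one_le.trans (dr.a_le.trans hα)
  have hβμ : β ≤ μ := hβ.trans dr.j_le
  -- a pair inside `[α, β]` would have to be `(i_r, j_r)`, which properness excludes
  have hfix : ∀ (σ : ℕ → ℕ) (g : ℕ → Col),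
      (∀ k, α ≤ k → k ≤ β → σ k = (TIter 1 μ E π₀ r).1 k) →
      (∀ k, α ≤ k → k < β → g k = (TIter 1 μ E π₀ r).2 k) → ¬ hasJ α β E σ g := by
    rintro σ g hσ hg ⟨j', h1, h2, i', h3, h4, h5, h6, h7⟩
    rw [fpos_in (by omega) (by omega), hg _ (by omega) (by omega)] at h5 h6
    rw [hσ _ (by omega) (by omega), hσ _ (by omega) (by omega)] at h7
    rw [← fpos_in (lo := 1) (hi := μ) (f := (TIter 1 μ E π₀ r).2) (by omega) (by omega)] at h5 h6
    have hle := jVal_le ⟨by omega, by omega, i', by omega, h4, h5, h6, h7⟩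
    rw [dr.j_eq] at hle
    have hj' : j' = j r := by omega
    subst hj'
    have := hmax ⟨by omega, h4, h5, h7⟩
    omega
  -- green positions at time `r` have never been covered by a step
  have hgreen : ∀ p, fpos 1 μ (TIter 1 μ E π₀ r).2 p = Col.green → ∀ t, t < r →
      p < a t ∨ j t ≤ p := by
    intro p hp t ht
    by_contra hc
    have hred : ∀ u, t + 1 ≤ u → u ≤ r → fpos 1 μ (TIter 1 μ E π₀ u).2 p = Col.red := by
      intro u hu
      induction u, hu using Nat.le_induction with
      | base =>
        intro _
        rw [hstep, (hd t ht.le).fpos_step, if_pos (by omega)]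
      | succ u hu ih =>
        intro hur
        rw [hstep, (hd u (by omega)).fpos_step, ih (by omega), ite_self]
    have := hred r ht le_rfl
    rw [hp] at this
    simp at this
  -- once `j_t > α`, the label at `α` no longer changes
  have hπα : ∀ t, t ≤ r → α < j t → (TIter 1 μ E π₀ r).1 α = (TIter 1 μ E π₀ t).1 α := by
    intro t ht hjt
    have : ∀ u, t ≤ u → u ≤ r → (TIter 1 μ E π₀ u).1 α = (TIter 1 μ E π₀ t).1 α := by
      intro u hu
      induction u, hu using Nat.le_induction with
      | base => exact fun _ => rfl
      | succ u hu ih =>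
        intro hur
        have h1 := hmono t u hu (by omega)
        have h2 := hgreen α hgα u hur
        rw [hstep, (hd u (by omega)).perm_out (by omega), ih (by omega)]
    exact this r ht le_rfl
  set ϑ : ℕ → ℕ := fun m => if m = α ∨ m = β then (TIter 1 μ E π₀ r).1 m else π₀ m with hϑ
  have hsim : ∀ t, t ≤ r → ∃ m, m ≤ t ∧ ∃ (σ : ℕ → ℕ) (g : ℕ → Col),
      (Tstep α β E)^[m] (ϑ, fun _ => Col.green) = (σ, g) ∧
      (∀ k, α < k → k < β → σ k = (TIter 1 μ E π₀ t).1 k) ∧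
      σ α = (TIter 1 μ E π₀ r).1 α ∧ σ β = (TIter 1 μ E π₀ r).1 β ∧
      (∀ k, α ≤ k → k < β → g k = (TIter 1 μ E π₀ t).2 k) := by
    intro t
    induction t with
    | zero =>
      intro _
      refine ⟨0, le_rfl, ϑ, _, rfl, ?_, by simp [hϑ], by simp [hϑ], fun _ _ _ => rfl⟩
      intro k h1 h2
      simp only [hϑ]
      rw [if_neg (by omega)]
      rfl
    | succ t ih =>
      intro ht
      obtain ⟨m, hm, σ, g, he, h1, h2, h3, h4⟩ := ih (by omega)
      have d := hd t (by omega)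
      have ea := hgreen α hgα t ht
      have eb := hgreen _ hgβ t ht
      have hai := d.a_le
      have hij := d.i_lt
      by_cases hin : α < a t ∧ j t < β
      · -- inside step
        have hσ : ∀ k, α ≤ k → k < β → σ k = (TIter 1 μ E π₀ t).1 k := by
          intro k k1 k2
          rcases k1.eq_or_lt with rfl | k1
          · rw [h2, hπα t (by omega) (by omega)]
          · exact h1 k k1 k2
        have hs := sim_step d (hasJ_of_le (by omega) hJ) hα1 hβμ hin.1 hin.2 σ g hσ h4
        refine ⟨m + 1, by omega, _, _, by rw [Function.iterate_succ_apply', he, hs], ?_, ?_, ?_, ?_⟩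
        · intro k k1 k2
          rw [hstep, d.step_eq]
          simp only [h1 k k1 k2]
        · rw [if_neg (by omega), h2]
        · rw [if_neg (by omega), h3]
        · intro k k1 k2
          rw [hstep, d.step_eq]
          simp only [h4 k k1 k2]
      · have hout : j t ≤ α ∨ β ≤ a t := by omega
        refine ⟨m, by omega, σ, g, he, ?_, h2, h3, ?_⟩
        · intro k k1 k2
          rw [hstep, d.perm_out (by omega), h1 k k1 k2]
        · intro k k1 k2
          rw [hstep, d.step_eq, h4 k k1 k2]
          exact (if_neg (by omega)).symm
  obtain ⟨m, hm, σ, g, he, h1, h2, h3, h4⟩ := hsim r le_rfl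
  have hσ : ∀ k, α ≤ k → k ≤ β → σ k = (TIter 1 μ E π₀ r).1 k := by
    intro k k1 k2
    rcases k1.eq_or_lt with rfl | k1
    · exact h2
    rcases k2.eq_or_lt with rfl | k2
    · exact h3
    exact h1 k k1 k2
  have hfinal : (Tstep α β E)^[r] (ϑ, fun _ => Col.green) = (σ, g) := by
    obtain ⟨n, rfl⟩ := Nat.exists_eq_add_of_le' hm
    rw [Function.iterate_add_apply, he]
    exact Function.iterate_fixed (Tstep_of_not (hfix σ g hσ h4)) n
  refine ⟨Tstep_of_not (hfix _ _ (fun _ _ _ => rfl) fun _ _ _ => rfl), ?_, ?_⟩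
  · rw [hfinal]
    exact hσ
  · rw [hfinal]
    exact fun k k1 k2 => h4 k k1 (by omega)
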